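/- arXiv:2106.12612 — 5 statements merged into one kernel-verified Lean document; each statement's English description precedes it below -/
import Mathlib

section
/- Let D ≥ 1 and let h : Fin D → ℝ satisfy h d > 0 for all d. Then the infimum, over all α : Fin D → ℝ with α d > 0 for all d and ∏_{d} α d = 1, of the quantity ∑_{d} h d / (α d)^2 equals D · (∏_{d} h d)^{1/D}; moreover this infimum is attained by some admissible α. -/
/-! The substitution `z = h / α ^ p` carries the scale parameters onto the positive tuples whose
product is `∏ i, h i`, so the problem becomes that of minimizing `∑ i, z i` with `∏ i, z i` fixed.
The inequality of arithmetic and geometric means gives the bound, and the constant tuple attains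
it. -/

section

variable {ι : Type*} [Fintype ι]

/-- The tuples of positive reals with product `P`. For `P = 1` these are the `α`-scale
parameters; the general `P` describes the terms of the sum to be minimized. -/
def positiveTuples (ι : Type*) [Fintype ι] (P : ℝ) : Set (ι → ℝ) :=
  {z | (∀ i, 0 < z i) ∧ ∏ i, z i = P}

theorem card_mul_geom_mean_le_sum [Nonempty ι] {z : ι → ℝ} (hz : ∀ i, 0 ≤ z i) :
    (Fintype.card ι : ℝ) * (∏ i, z i) ^ (1 / (Fintype.card ι : ℝ)) ≤ ∑ i, z i := by
  have hcard : (0 : ℝ) < Fintype.card ι := by exact_mod_cast Fintype.card_pos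
  have amgm : (∏ i, z i) ^ (1 / (Fintype.card ι : ℝ)) ≤ (∑ i, z i) / Fintype.card ι := by
    simpa using Real.geom_mean_le_arith_mean Finset.univ (fun _ ↦ 1) z
      (fun _ _ ↦ zero_le_one) (by simpa using hcard) (fun i _ ↦ hz i)
  exact (le_div_iff₀' hcard).1 amgm

theorem const_mem_positiveTuples [Nonempty ι] {P : ℝ} (hP : 0 < P) :
    (fun _ ↦ P ^ (1 / (Fintype.card ι : ℝ))) ∈ positiveTuples ι P := by
  refine ⟨fun _ ↦ Real.rpow_pos_of_pos hP _, ?_⟩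
  rw [Finset.prod_const, Finset.card_univ, one_div,
    Real.rpow_inv_natCast_pow hP.le Fintype.card_ne_zero]

theorem isLeast_sum_positiveTuples [Nonempty ι] {P : ℝ} (hP : 0 < P) :
    IsLeast ((fun z ↦ ∑ i, z i) '' positiveTuples ι P)
      ((Fintype.card ι : ℝ) * P ^ (1 / (Fintype.card ι : ℝ))) := by
  constructor
  · exact ⟨_, const_mem_positiveTuples hP, by simp⟩
  · rintro _ ⟨z, ⟨hz, rfl⟩, rfl⟩
    exact card_mul_geom_mean_le_sum fun i ↦ (hz i).le

theorem image_div_rpow_positiveTuples_one {h : ι → ℝ} (hh : ∀ i, 0 < h i) {p : ℝ} (hp : p ≠ 0) :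
    (fun α i ↦ h i / α i ^ p) '' positiveTuples ι 1 = positiveTuples ι (∏ i, h i) := by
  apply Set.Subset.antisymm
  · rintro _ ⟨α, ⟨hα, hα_prod⟩, rfl⟩
    refine ⟨fun i ↦ div_pos (hh i) (Real.rpow_pos_of_pos (hα i) p), ?_⟩
    rw [Finset.prod_div_distrib, Real.finsetProd_rpow _ _ fun i _ ↦ (hα i).le, hα_prod,
      Real.one_rpow, div_one]
  · rintro z ⟨hz, hz_prod⟩
    have hratio (i : ι) : 0 < h i / z i := div_pos (hh i) (hz i)
    have hratio_prod : ∏ i, h i / z i = 1 := by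
      rw [Finset.prod_div_distrib, hz_prod, div_self (Finset.prod_pos fun i _ ↦ hh i).ne']
    refine ⟨fun i ↦ (h i / z i) ^ p⁻¹, ⟨fun i ↦ Real.rpow_pos_of_pos (hratio i) _, ?_⟩, ?_⟩
    · rw [Real.finsetProd_rpow _ _ fun i _ ↦ (hratio i).le, hratio_prod, Real.one_rpow]
    · funext i
      change h i / ((h i / z i) ^ p⁻¹) ^ p = z i
      rw [Real.rpow_inv_rpow (hratio i).le hp, div_div_cancel₀ (hh i).ne']

theorem minimum_sharpness_closed_form_general [Nonempty ι] {h : ι → ℝ} (hh : ∀ i, 0 < h i)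
    {p : ℝ} (hp : p ≠ 0) :
    IsLeast ((fun α ↦ ∑ i, h i / α i ^ p) '' positiveTuples ι 1)
      ((Fintype.card ι : ℝ) * (∏ i, h i) ^ (1 / (Fintype.card ι : ℝ))) := by
  have hprod : 0 < ∏ i, h i := Finset.prod_pos fun i _ ↦ hh i
  have least := isLeast_sum_positiveTuples (ι := ι) hprod
  rwa [← image_div_rpow_positiveTuples_one hh hp, Set.image_image] at least

end

/-- For `D ≥ 1` and `h : Fin D → ℝ` with `h d > 0`, the infimum over
α-scale parameters `α` (i.e. `α d > 0` and `∏ d, α d = 1`) of `∑ d, h d / (α d)^2`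
equals `D * (∏ d, h d) ^ (1/D)`, and it is attained (i.e. it is a least element). -/
theorem minimum_sharpness_closed_form (D : ℕ) (hD : 1 ≤ D) (h : Fin D → ℝ)
    (hpos : ∀ d, 0 < h d) :
    IsLeast {s : ℝ | ∃ α : Fin D → ℝ, (∀ d, 0 < α d) ∧ (∏ d, α d) = 1 ∧
        s = ∑ d, h d / (α d) ^ 2}
      ((D : ℝ) * (∏ d, h d) ^ ((1 : ℝ) / (D : ℝ))) := by
  have : Nonempty (Fin D) := Fin.pos_iff_nonempty.1 hD
  simpa [Set.image, positiveTuples, and_assoc, eq_comm] using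
    minimum_sharpness_closed_form_general hpos two_ne_zero
end

section
/- Let D ≥ 1, let h : Fin D → ℝ satisfy h d > 0 for all d, and let α : Fin D → ℝ satisfy α d > 0 for all d and ∏_{d} α d = 1. Then the infimum over all β : Fin D → ℝ with β d > 0 and ∏_{d} β d = 1 of ∑_{d} (h d / (α d)^2) / (β d)^2 equals the infimum over the same set of β of ∑_{d} h d / (β d)^2. -/
/-!
The α-scale parameters form a group under pointwise multiplication. Dividing the traces by `α ^ 2`
amounts to replacing `β` by `α * β`, and multiplication by `α` permutes this group, so the values
over which the infimum is taken are the same.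
-/

section AlphaScale

variable {ι K : Type*} [Fintype ι] [Semifield K]

/-- The sum `∑ d, h d / (β d) ^ 2` of the per-layer Hessian traces after the α-scale transformation
with parameter `β`, when the traces before it are `h`. -/
def rescaledTrace (h β : ι → K) : K :=
  ∑ d, h d / β d ^ 2

theorem rescaledTrace_div_sq (h α β : ι → K) :
    rescaledTrace (h / α ^ 2) β = rescaledTrace h (α * β) := by
  simp only [rescaledTrace, Pi.div_apply, Pi.pow_apply, Pi.mul_apply, div_div, mul_pow]

variable [LinearOrder K]

variable (ι K) in
/-- The α-scale parameters, with layers indexed by `ι`: one positive factor per layer, with product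
one. -/
def alphaScales : Set (ι → K) :=
  {α | (∀ d, 0 < α d) ∧ ∏ d, α d = 1}

theorem image_rescaledTrace_alphaScales (h : ι → K) :
    rescaledTrace h '' alphaScales ι K =
      {s | ∃ β : ι → K, (∀ d, 0 < β d) ∧ ∏ d, β d = 1 ∧ s = ∑ d, h d / β d ^ 2} :=
  Set.ext fun _ ↦ exists_congr fun _ ↦ and_assoc.trans <|
    and_congr_right' <| and_congr_right' eq_comm

variable [IsStrictOrderedRing K] {α β : ι → K}

theorem mul_mem_alphaScales (hα : α ∈ alphaScales ι K) (hβ : β ∈ alphaScales ι K) :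
    α * β ∈ alphaScales ι K :=
  ⟨fun d ↦ mul_pos (hα.1 d) (hβ.1 d), by
    simp only [Pi.mul_apply, Finset.prod_mul_distrib, hα.2, hβ.2, mul_one]⟩

theorem div_mem_alphaScales (hα : α ∈ alphaScales ι K) (hβ : β ∈ alphaScales ι K) :
    α / β ∈ alphaScales ι K :=
  ⟨fun d ↦ div_pos (hα.1 d) (hβ.1 d), by
    simp only [Pi.div_apply, Finset.prod_div_distrib, hα.2, hβ.2, div_one]⟩

theorem image_mul_left_alphaScales (hα : α ∈ alphaScales ι K) :
    (α * ·) '' alphaScales ι K = alphaScales ι K := by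
  refine Set.Subset.antisymm (Set.image_subset_iff.2 fun β hβ ↦ mul_mem_alphaScales hα hβ) ?_
  intro β hβ
  exact ⟨β / α, div_mem_alphaScales hβ hα, funext fun d ↦ mul_div_cancel₀ (β d) (hα.1 d).ne'⟩

theorem minimum_sharpness_scale_invariant_general (h : ι → K) (hα : α ∈ alphaScales ι K) :
    rescaledTrace (h / α ^ 2) '' alphaScales ι K = rescaledTrace h '' alphaScales ι K :=
  calc
    rescaledTrace (h / α ^ 2) '' alphaScales ι K
    _ = (fun β ↦ rescaledTrace h (α * β)) '' alphaScales ι K :=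
      Set.image_congr fun β _ ↦ rescaledTrace_div_sq h α β
    _ = rescaledTrace h '' ((α * ·) '' alphaScales ι K) :=
      (Set.image_image (rescaledTrace h) (α * ·) (alphaScales ι K)).symm
    _ = rescaledTrace h '' alphaScales ι K := by rw [image_mul_left_alphaScales hα]

end AlphaScale

/-- Scale invariance of Minimum Sharpness: replacing the per-layer
traces `h d` by `h d / (α d)^2` for an α-scale parameter `α` does not change the
infimum over α-scale parameters `β` of `∑ d, (·) / (β d)^2`. -/
theorem minimum_sharpness_scale_invariant (D : ℕ) (hD : 1 ≤ D) (h α : Fin D → ℝ)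
    (hpos : ∀ d, 0 < h d) (hα : ∀ d, 0 < α d) (hαprod : (∏ d, α d) = 1) :
    sInf {s : ℝ | ∃ β : Fin D → ℝ, (∀ d, 0 < β d) ∧ (∏ d, β d) = 1 ∧
        s = ∑ d, (h d / (α d) ^ 2) / (β d) ^ 2}
      = sInf {s : ℝ | ∃ β : Fin D → ℝ, (∀ d, 0 < β d) ∧ (∏ d, β d) = 1 ∧
        s = ∑ d, h d / (β d) ^ 2} := by
  simpa only [image_rescaledTrace_alphaScales, Pi.div_apply, Pi.pow_apply]
    using congrArg sInf (minimum_sharpness_scale_invariant_general h ⟨hα, hαprod⟩)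
end

section
/- Let J : Matrix (Fin n) (Fin m) ℝ, W : Matrix (Fin m) (Fin K) ℝ with columns w_l = (fun i ↦ W i l), p : Fin K → ℝ, and x : Fin r → ℝ. Then the trace of the Kronecker product (J * W * (Matrix.diagonal p − Matrix.vecMulVec p p) * Wᵀ * Jᵀ) ⊗ₖ (Matrix.vecMulVec x x) equals ∑_{l} p l · ‖(J ⬝ᵥ w_l) xᵀ‖_F² − ‖(J ⬝ᵥ (W ⬝ᵥ p)) xᵀ‖_F², where for vectors u, v the matrix u vᵀ is vecMulVec u v and ‖A‖_F² = ∑_{i,j} (A i j)^2 is the squared Frobenius norm. -/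
open Matrix Kronecker

/-!
Put `A = J W`, with columns `a_l = J w_l`. The matrix `A (diag p - p pᵀ) Aᵀ` is the combination
`∑ l, p_l a_l a_lᵀ - (A p) (A p)ᵀ` of rank-one matrices, and a rank-one matrix `u uᵀ` contributes
`Tr[(u uᵀ) ⊗ₖ (x xᵀ)] = ‖u‖² ‖x‖² = ‖u xᵀ‖_F²` to the trace.
-/

section RankOne

variable {R l m n : Type*}

theorem col_mul_eq_mulVec_col [NonUnitalNonAssocSemiring R] [Fintype m]
    (A : Matrix l m R) (B : Matrix m n R) (j : n) : (A * B).col j = A *ᵥ B.col j :=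
  rfl

theorem mul_diagonal_mul_eq_sum_smul_vecMulVec [NonUnitalCommSemiring R] [Fintype m] [DecidableEq m]
    (A : Matrix l m R) (d : m → R) (B : Matrix m n R) :
    A * diagonal d * B = ∑ k, d k • vecMulVec (A.col k) (B.row k) := by
  ext i j
  rw [mul_apply, Matrix.sum_apply]
  refine Finset.sum_congr rfl fun k _ => ?_
  rw [mul_diagonal, Matrix.smul_apply, vecMulVec_apply, col_apply, row_apply, smul_eq_mul,
    mul_comm (A i k), mul_assoc]

theorem mul_diagonal_sub_vecMulVec_mul [NonUnitalCommRing R] [Fintype m] [DecidableEq m]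
    (A : Matrix l m R) (d u v : m → R) (B : Matrix m n R) :
    A * (diagonal d - vecMulVec u v) * B
      = ∑ k, d k • vecMulVec (A.col k) (B.row k) - vecMulVec (A *ᵥ u) (v ᵥ* B) := by
  rw [Matrix.mul_sub, Matrix.sub_mul, mul_diagonal_mul_eq_sum_smul_vecMulVec, mul_vecMulVec,
    vecMulVec_mul]

theorem trace_vecMulVec_self_kronecker_vecMulVec_self [CommSemiring R] [Fintype m] [Fintype n]
    (u : m → R) (x : n → R) :
    trace (vecMulVec u u ⊗ₖ vecMulVec x x) = ∑ i, ∑ j, vecMulVec u x i j ^ 2 := by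
  simp_rw [trace_kronecker, trace_vecMulVec, dotProduct, Finset.sum_mul_sum, vecMulVec_apply,
    mul_pow, sq]

end RankOne

theorem kronecker_hessian_block_trace_general {R n m k r : Type*} [CommRing R]
    [Fintype n] [Fintype m] [Fintype k] [DecidableEq k] [Fintype r]
    (J : Matrix n m R) (W : Matrix m k R) (p : k → R) (x : r → R) :
    trace ((J * W * (diagonal p - vecMulVec p p) * Wᵀ * Jᵀ) ⊗ₖ vecMulVec x x)
      = (∑ l, p l * ∑ i, ∑ j, vecMulVec (J *ᵥ W.col l) x i j ^ 2)
        - ∑ i, ∑ j, vecMulVec (J *ᵥ (W *ᵥ p)) x i j ^ 2 := by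
  have rank_one_decomposition :
      J * W * (diagonal p - vecMulVec p p) * Wᵀ * Jᵀ
        = ∑ l, p l • vecMulVec (J *ᵥ W.col l) (J *ᵥ W.col l)
          - vecMulVec (J *ᵥ (W *ᵥ p)) (J *ᵥ (W *ᵥ p)) := by
    rw [Matrix.mul_assoc _ Wᵀ, ← transpose_mul, mul_diagonal_sub_vecMulVec_mul, vecMul_transpose,
      row_transpose, mulVec_mulVec]
    simp_rw [col_mul_eq_mulVec_col]
  rw [rank_one_decomposition, trace_kronecker, trace_sub, trace_sum, sub_mul, Finset.sum_mul]
  simp_rw [trace_smul, smul_mul_assoc, ← trace_kronecker,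
    trace_vecMulVec_self_kronecker_vecMulVec_self, smul_eq_mul]

/-- Per-layer Hessian-block trace identity:
`Tr[(J W (diag p − p pᵀ) Wᵀ Jᵀ) ⊗ₖ (x xᵀ)]
  = ∑_l p_l ‖(J w_l) xᵀ‖_F² − ‖(J (W p)) xᵀ‖_F²`,
where `w_l` is the `l`-th column of `W` and `‖A‖_F² = ∑ i j, (A i j)^2`. -/
theorem kronecker_hessian_block_trace (n m K r : ℕ)
    (J : Matrix (Fin n) (Fin m) ℝ) (W : Matrix (Fin m) (Fin K) ℝ)
    (p : Fin K → ℝ) (x : Fin r → ℝ) :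
    Matrix.trace
        ((J * W * (Matrix.diagonal p - Matrix.vecMulVec p p) * Wᵀ * Jᵀ) ⊗ₖ
          Matrix.vecMulVec x x)
      = (∑ l, p l *
            ∑ i, ∑ j, (Matrix.vecMulVec (J.mulVec fun q => W q l) x i j) ^ 2)
        - ∑ i, ∑ j, (Matrix.vecMulVec (J.mulVec (W.mulVec p)) x i j) ^ 2 :=
  kronecker_hessian_block_trace_general J W p x
end

section
/- Let n, D, K ≥ 1 and suppose that for each data index i ∈ Fin n and layer index d ∈ Fin D we are given matrices J_{i,d} : Matrix (Fin (a d)) (Fin m) ℝ, vectors x_{i,d} : Fin (r d) → ℝ, probability weights p_i : Fin K → ℝ, and a matrix W : Matrix (Fin m) (Fin K) ℝ with columns w_l. Then (1/n) · ∑_{i} ∑_{d} trace[(J_{i,d} * W * (Matrix.diagonal (p_i) − Matrix.vecMulVec (p_i) (p_i)) * Wᵀ * J_{i,d}ᵀ) ⊗ₖ (Matrix.vecMulVec (x_{i,d}) (x_{i,d}))] = (1/n) · ∑_{i} ∑_{d} ( ∑_{l} p_i l · ‖(J_{i,d} ⬝ᵥ w_l) (x_{i,d})ᵀ‖_F² −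 ‖(J_{i,d} ⬝ᵥ (W ⬝ᵥ p_i)) (x_{i,d})ᵀ‖_F² ), where ‖A‖_F² = ∑_{i,j} (A i j)^2 and u vᵀ denotes vecMulVec u v. -/
open Matrix Kronecker

/-! Pushing `J W` through the softmax covariance `diag p − p pᵀ` writes a Hessian block as the
signed combination of rank-one matrices `∑ l, p_l (J w_l)(J w_l)ᵀ − (J W p)(J W p)ᵀ`. Since the
trace of `(u uᵀ) ⊗ (x xᵀ)` is `‖u‖² ‖x‖² = ‖u xᵀ‖_F²`, each rank-one term becomes the squared
Frobenius norm of one gradient. -/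

section CommSemiring

variable {R ι κ ν : Type*} [CommSemiring R]

/-- The squared Frobenius norm `‖A‖_F²` of a matrix, as the sum of the squares of its entries. No
conjugation is involved, so that it makes sense over every commutative semiring. -/
def frobeniusSq [Fintype ι] [Fintype κ] (A : Matrix ι κ R) : R :=
  ∑ i, ∑ j, A i j ^ 2

theorem frobeniusSq_vecMulVec [Fintype ι] [Fintype κ] (u : ι → R) (v : κ → R) :
    frobeniusSq (vecMulVec u v) = (u ⬝ᵥ u) * (v ⬝ᵥ v) := by
  simp only [frobeniusSq, vecMulVec_apply, mul_pow, dotProduct, ← sq, Finset.sum_mul_sum]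

theorem trace_vecMulVec_self_kronecker_vecMulVec_self_s10 [Fintype ι] [Fintype κ]
    (u : ι → R) (v : κ → R) :
    trace (vecMulVec u u ⊗ₖ vecMulVec v v) = frobeniusSq (vecMulVec u v) := by
  rw [trace_kronecker, trace_vecMulVec, trace_vecMulVec, frobeniusSq_vecMulVec]

theorem mul_diagonal_mul_transpose_eq_sum [Fintype κ] [DecidableEq κ]
    (A : Matrix ι κ R) (p : κ → R) (B : Matrix ν κ R) :
    A * diagonal p * Bᵀ = ∑ l, p l • vecMulVec (A.col l) (B.col l) := by
  ext i j
  simp only [mul_apply (N := Bᵀ), mul_diagonal, transpose_apply, Matrix.sum_apply,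
    Matrix.smul_apply, vecMulVec_apply, col_apply, smul_eq_mul]
  exact Finset.sum_congr rfl fun l _ => by ring

theorem mul_vecMulVec_mul_transpose [Fintype κ]
    (A : Matrix ι κ R) (u v : κ → R) (B : Matrix ν κ R) :
    A * vecMulVec u v * Bᵀ = vecMulVec (A *ᵥ u) (B *ᵥ v) := by
  rw [mul_vecMulVec, vecMulVec_mul, vecMul_transpose]

end CommSemiring

section CommRing

variable {R : Type*} [CommRing R]

theorem mul_diagonal_sub_vecMulVec_mul_transpose {ι κ ν : Type*} [Fintype κ] [DecidableEq κ]
    (A : Matrix ι κ R) (p u v : κ → R) (B : Matrix ν κ R) :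
    A * (diagonal p - vecMulVec u v) * Bᵀ =
      ∑ l, p l • vecMulVec (A.col l) (B.col l) - vecMulVec (A *ᵥ u) (B *ᵥ v) := by
  rw [Matrix.mul_sub, Matrix.sub_mul, mul_diagonal_mul_transpose_eq_sum,
    mul_vecMulVec_mul_transpose]

theorem trace_sum_smul_sub_kronecker {ι ν κ : Type*} [Fintype ι] [Fintype ν] [Fintype κ]
    (p : κ → R) (A : κ → Matrix ι ι R) (B : Matrix ι ι R) (C : Matrix ν ν R) :
    trace ((∑ l, p l • A l - B) ⊗ₖ C) = ∑ l, p l * trace (A l ⊗ₖ C) - trace (B ⊗ₖ C) := by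
  simp only [trace_kronecker, trace_sub, trace_sum, trace_smul, smul_eq_mul, sub_mul,
    Finset.sum_mul, mul_assoc]

theorem trace_hessian_block {ι μ κ ν : Type*} [Fintype ι] [Fintype μ] [Fintype κ] [DecidableEq κ]
    [Fintype ν] (J : Matrix ι μ R) (W : Matrix μ κ R) (p : κ → R) (x : ν → R) :
    trace ((J * W * (diagonal p - vecMulVec p p) * Wᵀ * Jᵀ) ⊗ₖ vecMulVec x x) =
      ∑ l, p l * frobeniusSq (vecMulVec (J *ᵥ W.col l) x) -
        frobeniusSq (vecMulVec (J *ᵥ (W *ᵥ p)) x) := by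
  have col_mul (l : κ) : (J * W).col l = J *ᵥ W.col l := rfl
  have block_eq : J * W * (diagonal p - vecMulVec p p) * Wᵀ * Jᵀ =
      ∑ l, p l • vecMulVec (J *ᵥ W.col l) (J *ᵥ W.col l) -
        vecMulVec (J *ᵥ (W *ᵥ p)) (J *ᵥ (W *ᵥ p)) := by
    rw [Matrix.mul_assoc _ Wᵀ, ← transpose_mul, mul_diagonal_sub_vecMulVec_mul_transpose]
    simp only [col_mul, mulVec_mulVec]
  simp only [block_eq, trace_sum_smul_sub_kronecker,
    trace_vecMulVec_self_kronecker_vecMulVec_self_s10]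

theorem hessian_trace_decomposition_general {δ Λ μ κ : Type*} [Fintype δ] [Fintype Λ] [Fintype μ]
    [Fintype κ] [DecidableEq κ] {ι ν : Λ → Type*} [∀ d, Fintype (ι d)] [∀ d, Fintype (ν d)]
    (J : δ → ∀ d, Matrix (ι d) μ R) (x : δ → ∀ d, ν d → R) (p : δ → κ → R) (W : Matrix μ κ R) :
    ∑ i, ∑ d, trace ((J i d * W * (diagonal (p i) - vecMulVec (p i) (p i)) * Wᵀ * (J i d)ᵀ) ⊗ₖ
        vecMulVec (x i d) (x i d)) =
      ∑ i, ∑ d, (∑ l, p i l * frobeniusSq (vecMulVec (J i d *ᵥ W.col l) (x i d)) -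
        frobeniusSq (vecMulVec (J i d *ᵥ (W *ᵥ p i)) (x i d))) := by
  simp only [trace_hessian_block]

end CommRing

/-- Matrix-identity form of Proposition 1: the averaged sum over data
`i` and layers `d` of the traces of the diagonal Hessian blocks
`(J_{i,d} W (diag p_i − p_i p_iᵀ) Wᵀ J_{i,d}ᵀ) ⊗ₖ (x_{i,d} x_{i,d}ᵀ)` equals the
averaged sum of the scores
`∑_l p_i l ‖(J_{i,d} w_l) x_{i,d}ᵀ‖_F² − ‖(J_{i,d} (W p_i)) x_{i,d}ᵀ‖_F²`. -/
theorem hessian_trace_decomposition (n D K m : ℕ)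
    (hn : 1 ≤ n) (hD : 1 ≤ D) (hK : 1 ≤ K)
    (a r : Fin D → ℕ)
    (J : Fin n → ∀ d : Fin D, Matrix (Fin (a d)) (Fin m) ℝ)
    (x : Fin n → ∀ d : Fin D, Fin (r d) → ℝ)
    (p : Fin n → Fin K → ℝ)
    (W : Matrix (Fin m) (Fin K) ℝ) :
    (1 / n : ℝ) *
        ∑ i, ∑ d,
          Matrix.trace
            ((J i d * W *
                (Matrix.diagonal (p i) - Matrix.vecMulVec (p i) (p i)) * Wᵀ *
                (J i d)ᵀ) ⊗ₖ Matrix.vecMulVec (x i d) (x i d))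
      = (1 / n : ℝ) *
          ∑ i, ∑ d,
            ((∑ l, p i l *
                ∑ i', ∑ j,
                  (Matrix.vecMulVec ((J i d).mulVec fun q => W q l) (x i d) i' j) ^ 2)
              - ∑ i', ∑ j,
                  (Matrix.vecMulVec ((J i d).mulVec (W.mulVec (p i))) (x i d) i' j) ^ 2) :=
  congrArg ((1 / n : ℝ) * ·) (hessian_trace_decomposition_general J x p W)
end

section
/- Fix D ≥ 1, weight matrices W_k for k = 1, …, D of a fully-connected ReLU network, an input x with activations x_1 = x and x_{k+1} = φ(W_k ⬝ᵥ x_k), and define σ'(t) = if t > 0 then 1 else 0 applied entrywise to the preactivations z_{k+1} = W_k ⬝ᵥ x_k. For 1 ≤ d < D define the Jacobian matrix J_d(W, x) = Matrix.diagonal (σ'(z_{d+1})) * (W_{d+1})ᵀ * Matrix.diagonal (σ'(z_{d+2})) * (W_{d+2})ᵀ * ⋯ * Matrix.diagonal (σ'(z_D)) * (W_D)ᵀ. If α : Fin D → ℝ satisfies α k > 0 for all k, then J_d computed from the rescaled weights (α k • W_k) at the same input x equals (∏_{k=d+1}^{D} α k) • J_d(W, x). -/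
open Matrix

/-- Activations of a fully-connected ReLU network: `acts D n W x k` is the activation
vector at layer `k` (the paper's `x_{k+1}`), with `acts 0 = x` and
`acts (k+1) = φ(W_k ⬝ᵥ acts k)`, `φ` being entrywise ReLU. -/
noncomputable def acts (D : ℕ) (n : ℕ → ℕ)
    (W : ∀ d : Fin D, Matrix (Fin (n (d.val + 1))) (Fin (n d.val)) ℝ)
    (x : Fin (n 0) → ℝ) : (k : ℕ) → k ≤ D → Fin (n k) → ℝ
  | 0, _ => x
  | k + 1, hk => fun i =>
      max (Matrix.mulVec (W ⟨k, hk⟩) (acts D n W x k (Nat.le_of_succ_le hk)) i) 0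

/-- Preactivations: `preact D n W x (k+1) = W_k ⬝ᵥ acts k` (the paper's `z_{k+2}`);
at level `0` we conventionally return the input. -/
noncomputable def preact (D : ℕ) (n : ℕ → ℕ)
    (W : ∀ d : Fin D, Matrix (Fin (n (d.val + 1))) (Fin (n d.val)) ℝ)
    (x : Fin (n 0) → ℝ) : (k : ℕ) → k ≤ D → Fin (n k) → ℝ
  | 0, _ => x
  | k + 1, hk => Matrix.mulVec (W ⟨k, hk⟩) (acts D n W x k (Nat.le_of_succ_le hk))

/-- The derivative of ReLU (with the convention `σ' 0 = 0`):
`σ'(t) = if t > 0 then 1 else 0`. -/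
noncomputable def reluDeriv (t : ℝ) : ℝ := if 0 < t then 1 else 0

/-- The layer Jacobian `J_d`, built as the left-to-right product
`J_d = diag(σ'(z_{d+1})) W_{d+1}ᵀ ⋯ diag(σ'(z_D)) W_Dᵀ` (paper 1-indexed; in 0-indexed
form `jac d j = F_d * F_{d+1} * ⋯ * F_{j-1}` for `j > d`, where
`F_j = diag(σ'(preact j)) * (W j)ᵀ`), with `jac d d = 1`. Values at `j < d` are junk. -/
noncomputable def jac (D : ℕ) (n : ℕ → ℕ)
    (W : ∀ d : Fin D, Matrix (Fin (n (d.val + 1))) (Fin (n d.val)) ℝ)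
    (x : Fin (n 0) → ℝ) (d : ℕ) :
    (j : ℕ) → j ≤ D → Matrix (Fin (n d)) (Fin (n j)) ℝ
  | 0, _ => fun i i' => if d = 0 ∧ (i : ℕ) = (i' : ℕ) then 1 else 0
  | j + 1, hj =>
      if d = j + 1 then
        fun i i' => if (i : ℕ) = (i' : ℕ) then 1 else 0
      else
        jac D n W x d j (Nat.le_of_succ_le hj) *
          (Matrix.diagonal (fun i => reluDeriv (preact D n W x j (Nat.le_of_succ_le hj) i)) *
            (W ⟨j, hj⟩)ᵀ)

/-!
ReLU is positively homogeneous, so rescaling the weights by positive scalars multiplies every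
preactivation by a positive number and leaves the masks `σ'(z_k)` unchanged. Each rescaled factor
`diag(σ'(z_k)) W_kᵀ` of the Jacobian is therefore `α_k` times the original one.
-/

/-- `layerProd α d j` is the product of `α k` over the layers `d ≤ k < j`, the paper's
`∏_{k=d+1}^{j} α_k`. -/
def layerProd {M : Type*} [CommMonoid M] {D : ℕ} (α : Fin D → M) (d j : ℕ) : M :=
  ∏ k ∈ Finset.univ.filter (fun k : Fin D => d ≤ (k : ℕ) ∧ (k : ℕ) < j), α k

section LayerProd

variable {M : Type*} [CommMonoid M] {D : ℕ}

lemma layerProd_self (α : Fin D → M) (d : ℕ) : layerProd α d d = 1 := by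
  refine Finset.prod_eq_one fun k hk => ?_
  obtain ⟨hdk, hkd⟩ := (Finset.mem_filter.mp hk).2
  omega

lemma layerProd_succ (α : Fin D → M) {d j : ℕ} (hdj : d ≤ j) (hj : j < D) :
    layerProd α d (j + 1) = layerProd α d j * α ⟨j, hj⟩ := by
  have layers_succ : Finset.univ.filter (fun k : Fin D => d ≤ (k : ℕ) ∧ (k : ℕ) < j + 1) =
      insert ⟨j, hj⟩ (Finset.univ.filter fun k : Fin D => d ≤ (k : ℕ) ∧ (k : ℕ) < j) := by
    ext k
    simp only [Finset.mem_filter_univ, Finset.mem_insert, Fin.ext_iff]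
    omega
  rw [layerProd, layers_succ, Finset.prod_insert (by simp), mul_comm, layerProd]

lemma layerProd_last (α : Fin D → M) (d : ℕ) :
    layerProd α d D = ∏ k ∈ Finset.univ.filter (fun k : Fin D => d ≤ (k : ℕ)), α k := by
  simp [layerProd]

end LayerProd

lemma layerProd_nonneg {R : Type*} [CommMonoidWithZero R] [Preorder R] [ZeroLEOneClass R]
    [PosMulMono R] {D : ℕ} {α : Fin D → R} {d j : ℕ}
    (hα : ∀ k : Fin D, d ≤ (k : ℕ) → (k : ℕ) < j → 0 ≤ α k) :
    0 ≤ layerProd α d j :=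
  Finset.prod_nonneg fun k hk => (Finset.mem_filter.mp hk).2.elim (hα k)

lemma layerProd_pos {R : Type*} [CommMonoidWithZero R] [PartialOrder R] [ZeroLEOneClass R]
    [PosMulStrictMono R] [Nontrivial R] {D : ℕ} {α : Fin D → R} {d j : ℕ}
    (hα : ∀ k : Fin D, d ≤ (k : ℕ) → (k : ℕ) < j → 0 < α k) :
    0 < layerProd α d j :=
  Finset.prod_pos fun k hk => (Finset.mem_filter.mp hk).2.elim (hα k)

lemma reluDeriv_mul_of_pos {c : ℝ} (hc : 0 < c) (t : ℝ) : reluDeriv (c * t) = reluDeriv t := by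
  simp only [reluDeriv, mul_pos_iff_of_pos_left hc]

section Network

variable {D : ℕ} {n : ℕ → ℕ} (W : ∀ d : Fin D, Matrix (Fin (n (d.val + 1))) (Fin (n d.val)) ℝ)
  (x : Fin (n 0) → ℝ)

lemma acts_succ_apply (k : ℕ) (hk : k + 1 ≤ D) (i : Fin (n (k + 1))) :
    acts D n W x (k + 1) hk i = max (preact D n W x (k + 1) hk i) 0 := rfl

lemma preact_succ_smul_of_acts_smul {α : Fin D → ℝ} {k : ℕ} (hk : k < D)
    (h : acts D n (fun k => α k • W k) x k hk.le = layerProd α 0 k • acts D n W x k hk.le) :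
    preact D n (fun k => α k • W k) x (k + 1) hk =
      layerProd α 0 (k + 1) • preact D n W x (k + 1) hk := by
  simp only [preact, h, smul_mulVec, mulVec_smul, smul_smul, layerProd_succ α k.zero_le hk]

lemma acts_smul {α : Fin D → ℝ} {k : ℕ} (hk : k ≤ D)
    (hα : ∀ l : Fin D, (l : ℕ) < k → 0 ≤ α l) :
    acts D n (fun k => α k • W k) x k hk = layerProd α 0 k • acts D n W x k hk := by
  induction k with
  | zero => rw [layerProd_self, one_smul, acts, acts]
  | succ k ih =>
    have hpreact := preact_succ_smul_of_acts_smul W x hk (ih (by omega) fun l hl => hα l (by omega))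
    have hprod : 0 ≤ layerProd α 0 (k + 1) := layerProd_nonneg fun l _ => hα l
    funext i
    rw [acts_succ_apply, hpreact, Pi.smul_apply, Pi.smul_apply, acts_succ_apply, smul_eq_mul,
      smul_eq_mul, mul_max_of_nonneg _ _ hprod, mul_zero]

lemma preact_smul {α : Fin D → ℝ} {k : ℕ} (hk : k ≤ D)
    (hα : ∀ l : Fin D, (l : ℕ) + 1 < k → 0 ≤ α l) :
    preact D n (fun k => α k • W k) x k hk = layerProd α 0 k • preact D n W x k hk := by
  cases k with
  | zero => rw [layerProd_self, one_smul, preact, preact]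
  | succ k =>
    exact preact_succ_smul_of_acts_smul W x hk
      (acts_smul W x (by omega) fun l hl => hα l (by omega))

lemma reluDeriv_preact_smul {α : Fin D → ℝ} {k : ℕ} (hk : k ≤ D)
    (hα : ∀ l : Fin D, (l : ℕ) < k → 0 < α l) (i : Fin (n k)) :
    reluDeriv (preact D n (fun k => α k • W k) x k hk i) =
      reluDeriv (preact D n W x k hk i) := by
  rw [preact_smul W x hk fun l hl => (hα l (by omega)).le, Pi.smul_apply, smul_eq_mul,
    reluDeriv_mul_of_pos (layerProd_pos fun l _ => hα l)]

lemma jac_self (d : ℕ) (hd : d ≤ D) : jac D n W x d d hd = 1 := by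
  ext i i'
  cases d <;> simp [jac, one_apply, Fin.ext_iff]

lemma jac_succ {d j : ℕ} (hdj : d ≤ j) (hj : j < D) :
    jac D n W x d (j + 1) hj =
      jac D n W x d j hj.le *
        (diagonal (fun i => reluDeriv (preact D n W x j hj.le i)) * (W ⟨j, hj⟩)ᵀ) := by
  rw [jac]
  exact if_neg (by omega)

/- The preactivation at level `k` depends only on `W 0, …, W (k - 1)`, and the last mask in the
product is that of level `j - 1`; hence the offset in `k + 1 < j`. -/
theorem jacobian_scaling_general {α : Fin D → ℝ} {d j : ℕ} (hdj : d ≤ j) (hj : j ≤ D)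
    (hα : ∀ k : Fin D, (k : ℕ) + 1 < j → 0 < α k) :
    jac D n (fun k => α k • W k) x d j hj = layerProd α d j • jac D n W x d j hj := by
  induction j, hdj using Nat.le_induction with
  | base => rw [jac_self, jac_self, layerProd_self, one_smul]
  | succ j hdj ih =>
    have hjD : j ≤ D := Nat.le_of_succ_le hj
    have hmask := reluDeriv_preact_smul W x hjD fun k hk => hα k (by omega)
    have hfactor :
        diagonal (fun i => reluDeriv (preact D n (fun k => α k • W k) x j hjD i)) *
            (α ⟨j, hj⟩ • W ⟨j, hj⟩)ᵀ =
          α ⟨j, hj⟩ • (diagonal (fun i => reluDeriv (preact D n W x j hjD i)) *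
            (W ⟨j, hj⟩)ᵀ) := by
      simp only [hmask, transpose_smul, Matrix.mul_smul]
    have hprefix := ih hjD fun k hk => hα k (by omega)
    rw [jac_succ _ x hdj hj, jac_succ W x hdj hj, hprefix, hfactor, layerProd_succ α hdj hj,
      Matrix.smul_mul, Matrix.mul_smul, smul_smul]

end Network

/-- Jacobian scaling law: if `α k > 0` for all `k`, then the Jacobian
`J_d` (for `1 ≤ d < D`) computed from the rescaled weights `α k • W k` at the same
input `x` equals `(∏_{k=d+1}^{D} α_k) • J_d(W, x)` (in 0-indexed form, the product of
`α j` over all `j : Fin D` with `d ≤ j`). -/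
theorem jacobian_scaling (D : ℕ) (n : ℕ → ℕ)
    (W : ∀ d : Fin D, Matrix (Fin (n (d.val + 1))) (Fin (n d.val)) ℝ)
    (x : Fin (n 0) → ℝ) (α : Fin D → ℝ) (hα : ∀ k, 0 < α k)
    (d : ℕ) (hd1 : 1 ≤ d) (hd2 : d < D) :
    jac D n (fun k => α k • W k) x d D le_rfl
      = (∏ k ∈ Finset.univ.filter (fun k : Fin D => d ≤ (k : ℕ)), α k) •
          jac D n W x d D le_rfl := by
  rw [← layerProd_last]
  exact jacobian_scaling_general W x hd2.le le_rfl fun k _ => hα k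
end
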